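/- Under the hypotheses of the platoon prescribed-performance theorem (unicycle platoon of N vehicles with leader having bounded velocities v_0, ω_0, control laws v_i(t) = k_{d_i}·ε_{M̲_{d_i}, M̄_{d_i}}((d_i(t) − d_{i,des})/ρ_{d_i}(t)) and ω_i(t) = (k_{β_i}/ρ_{β_i}(t))·r_{β_con,β_con}(β_i(t)/ρ_{β_i}(t))·ε_{β_con,β_con}(β_i(t)/ρ_{β_i}(t)), and initial conditions d_col < d_i(0) < d_con, |β_i(0)| < β_con), there exist constants ξ̲_{d_i}, ξ̄_{d_i} with −M̲_{d_i} < ξ̲_{d_i} ≤ ξ̄_{d_i} < M̄_{d_i} and constants ξ̲_{β_i}, ξ̄_{β_i} with −β_con < ξ̲_{β_i} ≤ ξ̄_{β_i} < β_con such that for all t ≥ 0 and all i = 1, …, N: ξ̲_{d_i} ≤ (d_i(t) − d_{i,des})/ρ_{d_i}(t) ≤ ξ̄_{d_i} and ξ̲_{β_i} ≤ β_i(t)/ρ_{β_i}(t) ≤ ξ̄_{β_i}; consequently there exists a constant C > 0 such that |v_i(t)| ≤ C and |ω_i(t)| ≤ C for all t ≥ 0 and all i = 1, …, N. -/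

import Mathlib

/-- The transformed error ε_{a,b}(x) = log((1 + x/a)/(1 − x/b)). -/
noncomputable def epsErr (a b x : ℝ) : ℝ := Real.log ((1 + x / a) / (1 - x / b))

/-- The gain function r_{a,b}(x) = (1/a + 1/b)/((1 + x/a)(1 − x/b)). -/
noncomputable def gainFn (a b x : ℝ) : ℝ :=
  (1 / a + 1 / b) / ((1 + x / a) * (1 - x / b))

/-- The performance function ρ(t) = (1 − ρ_∞/M)e^{−l t} + ρ_∞/M. -/
noncomputable def perfFn (l ρ_inf M t : ℝ) : ℝ :=
  (1 - ρ_inf / M) * Real.exp (-l * t) + ρ_inf / M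

lemma pp_neg_of_deriv {h : ℝ → ℝ} {D T : ℝ} (hT : 0 < T)
    (hd : HasDerivWithinAt h D (Set.Ici (0:ℝ)) T) (hD : D < 0) (h0 : h T = 0)
    (hneg : ∀ s, 0 ≤ s → s < T → h s < 0) : False := by
  have hd' : HasDerivAt h D T := hd.hasDerivAt (Ici_mem_nhds hT)
  rw [hasDerivAt_iff_tendsto_slope] at hd'
  have h1 : ∀ᶠ s in nhdsWithin T {T}ᶜ, slope h T s < 0 := hd'.eventually (gt_mem_nhds hD)
  have h2 : ∀ᶠ s in nhdsWithin T (Set.Iio T), slope h T s < 0 :=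
    h1.filter_mono (nhdsWithin_mono _ (fun s hs => ne_of_lt hs))
  have h3 : ∀ᶠ s in nhdsWithin T (Set.Iio T), s ∈ Set.Ioo 0 T := Ioo_mem_nhdsLT hT
  obtain ⟨s, hs, hs'⟩ := (h2.and h3).exists
  rw [slope_def_field, h0, sub_zero] at hs
  have := hneg s hs'.1.le hs'.2
  have : 0 < h s / (s - T) := div_pos_of_neg_of_neg this (by linarith [hs'.2])
  linarith

/-- Forward invariance of a region cut out by finitely many barrier functions. -/
lemma pp_barrier {ι : Type*} [Finite ι] (h D : ι → ℝ → ℝ)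
    (hd : ∀ j t, 0 ≤ t → HasDerivWithinAt (h j) (D j t) (Set.Ici (0:ℝ)) t)
    (h0 : ∀ j, h j 0 < 0)
    (hD : ∀ j t, 0 ≤ t → (∀ k, h k t ≤ 0) → h j t = 0 → D j t < 0) :
    ∀ t, 0 ≤ t → ∀ j, h j t ≤ 0 := by
  by_contra hcon
  push Not at hcon
  obtain ⟨t1, ht1, j1, hj1⟩ := hcon
  have hc : ∀ j, ContinuousOn (h j) (Set.Ici (0:ℝ)) :=
    fun j t ht => (hd j t ht).continuousWithinAt
  let S : Set ℝ := ⋃ j, (Set.Ici (0:ℝ) ∩ h j ⁻¹' Set.Ici 0)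
  have hS : IsClosed S := by
    apply isClosed_iUnion_of_finite
    intro j
    exact (hc j).preimage_isClosed_of_isClosed isClosed_Ici isClosed_Ici
  have hne : S.Nonempty := ⟨t1, Set.mem_iUnion.2 ⟨j1, ht1, hj1.le⟩⟩
  have hbd : BddBelow S := ⟨0, by
    intro s hs
    obtain ⟨j, hj⟩ := Set.mem_iUnion.1 hs
    exact hj.1⟩
  have hmem := hS.csInf_mem hne hbd
  set T := sInf S with hTdef
  have hlt : ∀ s, 0 ≤ s → s < T → ∀ j, h j s < 0 := by
    intro s hs hsT j
    by_contra hh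
    push Not at hh
    have : T ≤ s := csInf_le hbd (Set.mem_iUnion.2 ⟨j, hs, hh⟩)
    linarith
  obtain ⟨j, hj0, hj⟩ := Set.mem_iUnion.1 hmem
  have hj' : 0 ≤ h j T := hj
  have hT0 : (0:ℝ) ≤ T := hj0
  have hTpos : 0 < T := by
    rcases hT0.lt_or_eq with h' | h'
    · exact h'
    · rw [← h'] at hj'
      linarith [h0 j]
  have hle : ∀ k, h k T ≤ 0 := by
    intro k
    have hct : ContinuousAt (h k) T := (hc k).continuousAt (Ici_mem_nhds hTpos)
    have h1 : Filter.Tendsto (h k) (nhdsWithin T (Set.Iio T)) (nhds (h k T)) :=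
      hct.tendsto.mono_left nhdsWithin_le_nhds
    refine le_of_tendsto h1 ?_
    have h3 : ∀ᶠ s in nhdsWithin T (Set.Iio T), s ∈ Set.Ioo 0 T := Ioo_mem_nhdsLT hTpos
    filter_upwards [h3] with s hs
    exact (hlt s hs.1.le hs.2 k).le
  have heq : h j T = 0 := le_antisymm (hle j) hj'
  exact pp_neg_of_deriv hTpos (hd j T hT0) (hD j T hT0 hle heq) heq
    (fun s hs hs' => hlt s hs hs' j)

lemma pp_eps_upper (a b x0 L : ℝ) (ha : 0 < a) (hb : 0 < b) (hx0 : x0 < b) :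
    ∃ x, x0 < x ∧ 0 < x ∧ x < b ∧ L ≤ epsErr a b x := by
  set δ := min (1/2) (min (Real.exp (-L)) ((b - x0) / (2 * b))) with hδ
  have hδ0 : 0 < δ := by
    refine lt_min (by norm_num) (lt_min (Real.exp_pos _) (div_pos (by linarith) (by linarith)))
  have h1 : δ ≤ 1/2 := min_le_left _ _
  have h2 : δ ≤ Real.exp (-L) := (min_le_right _ _).trans (min_le_left _ _)
  have h3 : δ ≤ (b - x0) / (2 * b) := (min_le_right _ _).trans (min_le_right _ _)
  rw [le_div_iff₀ (by linarith)] at h3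
  have hx : 0 < b * (1 - δ) := mul_pos hb (by linarith)
  refine ⟨b * (1 - δ), by nlinarith, hx, by nlinarith, ?_⟩
  unfold epsErr
  have e : 1 - b * (1 - δ) / b = δ := by field_simp; ring
  rw [e]
  have h4 : 1 ≤ 1 + b * (1 - δ) / a := by
    have := div_pos hx ha
    linarith
  rw [Real.le_log_iff_exp_le (by positivity), le_div_iff₀ hδ0]
  calc Real.exp L * δ ≤ Real.exp L * Real.exp (-L) := by gcongr
    _ = 1 := by rw [← Real.exp_add]; simp
    _ ≤ _ := h4

lemma pp_eps_neg (a b x : ℝ) : epsErr a b (-x) = - epsErr b a x := by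
  unfold epsErr
  rw [← Real.log_inv, inv_div]
  congr 1
  ring

lemma pp_eps_lower (a b x0 L : ℝ) (ha : 0 < a) (hb : 0 < b) (hx0 : -a < x0) :
    ∃ x, x < x0 ∧ x < 0 ∧ -a < x ∧ epsErr a b x ≤ -L := by
  obtain ⟨x, h1, h2, h3, h4⟩ := pp_eps_upper b a (-x0) L hb ha (by linarith)
  refine ⟨-x, by linarith, by linarith, by linarith, ?_⟩
  rw [pp_eps_neg]
  linarith

lemma pp_pos1 {a x : ℝ} (ha : 0 < a) (hx : -a < x) : 0 < 1 + x / a := by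
  have : -1 < x / a := by rw [lt_div_iff₀ ha]; linarith
  linarith

lemma pp_pos2 {b x : ℝ} (hb : 0 < b) (hx : x < b) : 0 < 1 - x / b := by
  have : x / b < 1 := by rw [div_lt_iff₀ hb]; linarith
  linarith

lemma pp_eps_cont {a b lo hi : ℝ} (ha : 0 < a) (hb : 0 < b) (hlo : -a < lo) (hhi : hi < b) :
    ContinuousOn (epsErr a b) (Set.Icc lo hi) := by
  intro x hx
  have h1 := pp_pos1 ha (hlo.trans_le hx.1)
  have h2 := pp_pos2 hb (hx.2.trans_lt hhi)
  apply ContinuousAt.continuousWithinAt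
  unfold epsErr
  refine ContinuousAt.log (ContinuousAt.div (by fun_prop) (by fun_prop) h2.ne') ?_
  positivity

lemma pp_gain_cont {a b lo hi : ℝ} (ha : 0 < a) (hb : 0 < b) (hlo : -a < lo) (hhi : hi < b) :
    ContinuousOn (gainFn a b) (Set.Icc lo hi) := by
  intro x hx
  have h1 := pp_pos1 ha (hlo.trans_le hx.1)
  have h2 := pp_pos2 hb (hx.2.trans_lt hhi)
  apply ContinuousAt.continuousWithinAt
  unfold gainFn
  refine ContinuousAt.div (by fun_prop) (by fun_prop) ?_
  positivity

lemma pp_gain_lower {b x : ℝ} (hb : 0 < b) (h1 : -b < x) (h2 : x < b) :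
    2 / b ≤ gainFn b b x := by
  have h1 := pp_pos1 hb h1
  have h2 := pp_pos2 hb h2
  unfold gainFn
  rw [le_div_iff₀ (by positivity)]
  have : (1 + x / b) * (1 - x / b) ≤ 1 := by nlinarith [sq_nonneg (x / b)]
  have h3 : 0 < 1 / b := by positivity
  have : 2 / b * ((1 + x / b) * (1 - x / b)) ≤ 2 / b * 1 := by gcongr
  calc _ ≤ _ := this
    _ = _ := by ring

/-- Properties of the performance function. -/
lemma pp_perf {l r M : ℝ} (hl : 0 < l) (hr : 0 < r) (hM : r < M) :
    perfFn l r M 0 = 1 ∧ 0 < r / M ∧ ∃ ρ' : ℝ → ℝ, ∀ t, 0 ≤ t →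
      r / M ≤ perfFn l r M t ∧ perfFn l r M t ≤ 1 ∧ |ρ' t| ≤ l ∧
      HasDerivWithinAt (perfFn l r M) (ρ' t) (Set.Ici (0:ℝ)) t := by
  have hM0 : 0 < M := hr.trans hM
  have hc : r / M < 1 := by rw [div_lt_one hM0]; exact hM
  have hc0 : 0 < r / M := by positivity
  refine ⟨by simp [perfFn], hc0, fun t => (1 - r / M) * (Real.exp (-l * t) * -l), ?_⟩
  intro t ht
  have he : Real.exp (-l * t) ≤ 1 := Real.exp_le_one_iff.2 (by nlinarith)
  have he0 := Real.exp_pos (-l * t)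
  refine ⟨?_, ?_, ?_, ?_⟩
  · unfold perfFn; nlinarith
  · unfold perfFn; nlinarith
  · rw [abs_le]
    have h1 : (1 - r / M) * Real.exp (-l * t) ≤ 1 := by nlinarith
    have h2 : 0 ≤ (1 - r / M) * Real.exp (-l * t) := mul_nonneg (by linarith) he0.le
    constructor <;> nlinarith
  · apply HasDerivAt.hasDerivWithinAt
    unfold perfFn
    have := (((hasDerivAt_id t).const_mul (-l)).exp.const_mul (1 - r / M)).add_const (r / M)
    simpa using this

lemma pp_neg_mul {a p : ℝ} (ha : a < 0) (hp : p ≤ 1) : a ≤ a * p := by nlinarith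

lemma pp_mul_up {e K p l : ℝ} (he : 0 < e) (hK : e ≤ K) (hl : 0 < l) (hp : -l ≤ p) :
    -(e * p) ≤ K * l := by nlinarith

lemma pp_mul_lo {a K p l : ℝ} (ha : a < 0) (hK : -a ≤ K) (hl : 0 < l) (hp : -l ≤ p) :
    a * p ≤ K * l := by nlinarith

set_option maxHeartbeats 4000000 in
lemma pp_step (dcol dcon bc rd rb ld lb des kd kb C0 : ℝ)
    (hdcol : 0 < dcol) (hdes1 : dcol < des) (hdes2 : des < dcon)
    (hbc : 0 < bc) (hbc' : bc < Real.pi / 2) (hld : 0 < ld) (hlb : 0 < lb)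
    (hrd : 0 < rd) (hrd' : rd < max (des - dcol) (dcon - des))
    (hrb : 0 < rb) (hrb' : rb < bc) (hkd : 0 < kd) (hkb : 0 < kb)
    (d β v ω v0 α d1 b1 : ℝ → ℝ)
    (hv0 : ∀ t, 0 ≤ t → |v0 t| ≤ C0)
    (hd : ∀ t, 0 ≤ t → HasDerivWithinAt d (d1 t) (Set.Ici (0:ℝ)) t)
    (hb : ∀ t, 0 ≤ t → HasDerivWithinAt β (b1 t) (Set.Ici (0:ℝ)) t)
    (hd1 : ∀ t, 0 ≤ t → d1 t = v0 t * Real.cos (α t) - v t * Real.cos (β t))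
    (hb1 : ∀ t, 0 ≤ t → d t * (b1 t + ω t) = v0 t * Real.sin (α t) + v t * Real.sin (β t))
    (hv : ∀ t : ℝ, 0 ≤ t → v t = kd * epsErr (des - dcol) (dcon - des)
        ((d t - des) / perfFn ld rd (max (des - dcol) (dcon - des)) t))
    (hω : ∀ t : ℝ, 0 ≤ t → ω t = (kb / perfFn lb rb bc t) *
        gainFn bc bc (β t / perfFn lb rb bc t) *
        epsErr bc bc (β t / perfFn lb rb bc t))
    (hi1 : dcol < d 0) (hi2 : d 0 < dcon) (hi3 : |β 0| < bc) :
    ∃ a1 e1 a2 e2 C : ℝ, (-(des - dcol) < a1 ∧ a1 ≤ e1 ∧ e1 < dcon - des) ∧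
      (-bc < a2 ∧ a2 ≤ e2 ∧ e2 < bc) ∧
      (∀ t : ℝ, 0 ≤ t →
        (a1 ≤ (d t - des) / perfFn ld rd (max (des - dcol) (dcon - des)) t ∧
          (d t - des) / perfFn ld rd (max (des - dcol) (dcon - des)) t ≤ e1) ∧
        (a2 ≤ β t / perfFn lb rb bc t ∧ β t / perfFn lb rb bc t ≤ e2)) ∧
      ∀ t : ℝ, 0 ≤ t → |v t| ≤ C ∧ |ω t| ≤ C := by
  obtain ⟨hp0, hpm, p', hp⟩ := pp_perf hld hrd hrd'
  obtain ⟨hq0, hqm, q', hq⟩ := pp_perf hlb hrb hrb'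
  set p := perfFn ld rd (max (des - dcol) (dcon - des)) with hpdef
  set q := perfFn lb rb bc with hqdef
  set A := des - dcol with hA
  set B := dcon - des with hB
  have hA0 : 0 < A := by simp only [hA]; linarith
  have hB0 : 0 < B := by simp only [hB]; linarith
  have hC0 : 0 ≤ C0 := (abs_nonneg _).trans (hv0 0 le_rfl)
  have hc : 0 < Real.cos bc := Real.cos_pos_of_mem_Ioo ⟨by linarith, hbc'⟩
  set c := Real.cos bc with hcdef
  obtain ⟨hi3a, hi3b⟩ := abs_lt.1 hi3
  -- thresholds for the distance
  set L1 := (C0 + (A + B) * ld + 1) / (kd * c) with hL1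
  have hL1' : kd * L1 * c = C0 + (A + B) * ld + 1 := by rw [hL1]; field_simp
  have hL1p : 0 < L1 := by positivity
  obtain ⟨e1, he1, he1', he1'', he1L⟩ := pp_eps_upper A B (d 0 - des) L1 hA0 hB0
    (by simp only [hB]; linarith)
  obtain ⟨a1, ha1, ha1', ha1'', ha1L⟩ := pp_eps_lower A B (d 0 - des) L1 hA0 hB0
    (by simp only [hA]; linarith)
  obtain ⟨E, hE⟩ := (isCompact_Icc (a := a1) (b := e1)).exists_bound_of_continuousOn
    (pp_eps_cont hA0 hB0 ha1'' he1'')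
  have hE0 : 0 ≤ E := (norm_nonneg _).trans (hE a1 ⟨le_rfl, by linarith⟩)
  set V := kd * E with hV
  have hV0 : 0 ≤ V := by positivity
  set W := (C0 + V) / dcol with hW
  have hW0 : 0 ≤ W := by positivity
  have hWd : W * dcol = C0 + V := by rw [hW]; field_simp
  set L2 := (W + bc * lb + 1) / (kb * (2 / bc)) with hL2
  have hL2' : kb * (2 / bc) * L2 = W + bc * lb + 1 := by rw [hL2]; field_simp
  have hL2p : 0 < L2 := by positivity
  obtain ⟨e2, he2, he2', he2'', he2L⟩ := pp_eps_upper bc bc (β 0) L2 hbc hbc hi3b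
  obtain ⟨a2, ha2, ha2', ha2'', ha2L⟩ := pp_eps_lower bc bc (β 0) L2 hbc hbc hi3a
  -- facts valid inside the box
  have hppos : ∀ t, 0 ≤ t → 0 < p t := fun t ht => hpm.trans_le (hp t ht).1
  have hqpos : ∀ t, 0 ≤ t → 0 < q t := fun t ht => hqm.trans_le (hq t ht).1
  have hcos : ∀ t, 0 ≤ t → β t ≤ e2 * q t → a2 * q t ≤ β t → c ≤ Real.cos (β t) := by
    intro t ht h1 h2
    have hq1 := (hq t ht).2.1
    have hq2 := hqpos t ht
    have : |β t| ≤ bc := abs_le.2 ⟨by linarith [pp_neg_mul ha2' hq1],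
      by linarith [mul_le_of_le_one_right he2'.le hq1]⟩
    rw [← Real.cos_abs (β t)]
    exact Real.cos_le_cos_of_nonneg_of_le_pi (abs_nonneg _) (by linarith [Real.pi_pos]) this
  have hvE : ∀ t, 0 ≤ t → d t - des ≤ e1 * p t → a1 * p t ≤ d t - des → |v t| ≤ V := by
    intro t ht h1 h2
    rw [hv t ht, abs_mul, abs_of_pos hkd, hV]
    gcongr
    exact hE _ ⟨by rwa [le_div_iff₀ (hppos t ht)], by rwa [div_le_iff₀ (hppos t ht)]⟩
  have htheta : ∀ t, 0 ≤ t → d t - des ≤ e1 * p t → a1 * p t ≤ d t - des →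
      |b1 t + ω t| ≤ W := by
    intro t ht h1 h2
    have hV' := hvE t ht h1 h2
    have hp1 := (hp t ht).2.1
    have hp2 := hppos t ht
    have hdge : dcol ≤ d t := by
      have : a1 ≤ a1 * p t := pp_neg_mul ha1' hp1
      simp only [hA] at ha1''
      linarith
    have hd0 : 0 < d t := by linarith
    have h3 : |d t * (b1 t + ω t)| ≤ C0 + V := by
      rw [hb1 t ht]
      refine (abs_add_le _ _).trans ?_
      rw [abs_mul, abs_mul]
      have := hv0 t ht
      have s1 := Real.abs_sin_le_one (α t)
      have s2 := Real.abs_sin_le_one (β t)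
      have := mul_le_mul (hv0 t ht) s1 (abs_nonneg _) hC0
      have := mul_le_mul hV' s2 (abs_nonneg _) hV0
      linarith
    rw [abs_mul, abs_of_pos hd0] at h3
    have h4 : dcol * |b1 t + ω t| ≤ d t * |b1 t + ω t| := by gcongr
    rw [hW, le_div_iff₀ hdcol]
    linarith
  have hv0c : ∀ t, 0 ≤ t → |v0 t * Real.cos (α t)| ≤ C0 := by
    intro t ht
    rw [abs_mul]
    have := mul_le_mul (hv0 t ht) (Real.abs_cos_le_one (α t)) (abs_nonneg _) hC0
    linarith
  have hωup : ∀ t, 0 ≤ t → ∀ z, -bc < z → z < bc → L2 ≤ epsErr bc bc z →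
      W + bc * lb + 1 ≤ kb / q t * gainFn bc bc z * epsErr bc bc z := by
    intro t ht z hz1 hz2 hz
    rw [← hL2']
    have hg := pp_gain_lower hbc hz1 hz2
    have hk : kb ≤ kb / q t := by
      rw [le_div_iff₀ (hqpos t ht)]
      exact mul_le_of_le_one_right hkb.le (hq t ht).2.1
    have hkq : 0 < kb / q t := by linarith
    have h2b : 0 < 2 / bc := by positivity
    have hg0 : 0 < gainFn bc bc z := by linarith
    gcongr
  have hgneg : ∀ z, gainFn bc bc (-z) = gainFn bc bc z := by
    intro z
    unfold gainFn
    congr 1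
    ring
  -- the barrier functions
  let h : Fin 4 → ℝ → ℝ := ![fun t => d t - des - e1 * p t, fun t => a1 * p t - (d t - des),
    fun t => β t - e2 * q t, fun t => a2 * q t - β t]
  let D : Fin 4 → ℝ → ℝ := ![fun t => d1 t - e1 * p' t, fun t => a1 * p' t - d1 t,
    fun t => b1 t - e2 * q' t, fun t => a2 * q' t - b1 t]
  have key : ∀ t, 0 ≤ t → ∀ j, h j t ≤ 0 := by
    apply pp_barrier h D
    · intro j t ht
      have k1 := hd t ht
      have k2 := hb t ht
      have k3 := (hp t ht).2.2.2
      have k4 := (hq t ht).2.2.2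
      fin_cases j
      · exact (k1.sub_const des).sub (k3.const_mul e1)
      · exact (k3.const_mul a1).sub (k1.sub_const des)
      · exact k2.sub (k4.const_mul e2)
      · exact (k4.const_mul a2).sub k2
    · intro j
      fin_cases j
      · change d 0 - des - e1 * p 0 < 0
        rw [hp0]; linarith
      · change a1 * p 0 - (d 0 - des) < 0
        rw [hp0]; linarith
      · change β 0 - e2 * q 0 < 0
        rw [hq0]; linarith
      · change a2 * q 0 - β 0 < 0
        rw [hq0]; linarith
    · intro j t ht hall hj
      have g0 : d t - des - e1 * p t ≤ 0 := hall 0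
      have g1 : a1 * p t - (d t - des) ≤ 0 := hall 1
      have g2 : β t - e2 * q t ≤ 0 := hall 2
      have g3 : a2 * q t - β t ≤ 0 := hall 3
      have hcs := hcos t ht (by linarith) (by linarith)
      have hth := abs_le.1 (htheta t ht (by linarith) (by linarith))
      have hvc := abs_le.1 (hv0c t ht)
      have hp'' := abs_le.1 (hp t ht).2.2.1
      have hq'' := abs_le.1 (hq t ht).2.2.1
      have hpp := hppos t ht
      have hqp := hqpos t ht
      fin_cases j
      · change d1 t - e1 * p' t < 0
        have hj' : d t - des - e1 * p t = 0 := hj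
        have hξ : (d t - des) / p t = e1 := by rw [div_eq_iff hpp.ne']; linarith
        have hvt := hv t ht
        rw [hξ] at hvt
        have hvL : kd * L1 ≤ v t := by rw [hvt]; gcongr
        have h5 : kd * L1 * c ≤ v t * Real.cos (β t) := by
          have : 0 < kd * L1 := by positivity
          gcongr
          linarith
        have h6 : -(e1 * p' t) ≤ (A + B) * ld := pp_mul_up he1' (by linarith) hld hp''.1
        rw [hd1 t ht]
        linarith
      · change a1 * p' t - d1 t < 0
        have hj' : a1 * p t - (d t - des) = 0 := hj
        have hξ : (d t - des) / p t = a1 := by rw [div_eq_iff hpp.ne']; linarith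
        have hvt := hv t ht
        rw [hξ] at hvt
        have hvL : kd * L1 ≤ - v t := by
          rw [hvt, ← mul_neg]
          gcongr
          linarith
        have h5 : kd * L1 * c ≤ (- v t) * Real.cos (β t) := by
          have : 0 < kd * L1 := by positivity
          gcongr
          linarith
        have h6 : a1 * p' t ≤ (A + B) * ld := pp_mul_lo ha1' (by linarith) hld hp''.1
        rw [hd1 t ht]
        linarith
      · change b1 t - e2 * q' t < 0
        have hj' : β t - e2 * q t = 0 := hj
        have hξ : β t / q t = e2 := by rw [div_eq_iff hqp.ne']; linarith
        have hωt := hω t ht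
        rw [hξ] at hωt
        have := hωup t ht e2 (by linarith) he2'' he2L
        have h6 : -(e2 * q' t) ≤ bc * lb := pp_mul_up he2' he2''.le hlb hq''.1
        linarith
      · change a2 * q' t - b1 t < 0
        have hj' : a2 * q t - β t = 0 := hj
        have hξ : β t / q t = a2 := by rw [div_eq_iff hqp.ne']; linarith
        have hωt := hω t ht
        rw [hξ] at hωt
        have e : epsErr bc bc (-a2) = - epsErr bc bc a2 := pp_eps_neg _ _ _
        have := hωup t ht (-a2) (by linarith) (by linarith) (by rw [e]; linarith)
        rw [e, hgneg, mul_neg, ← hωt] at this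
        have h6 : a2 * q' t ≤ bc * lb := pp_mul_lo ha2' (by linarith) hlb hq''.1
        linarith
  -- conclusion
  have hbox : ∀ t : ℝ, 0 ≤ t → (a1 ≤ (d t - des) / p t ∧ (d t - des) / p t ≤ e1) ∧
        (a2 ≤ β t / q t ∧ β t / q t ≤ e2) := by
    intro t ht
    have g0 : d t - des - e1 * p t ≤ 0 := key t ht 0
    have g1 : a1 * p t - (d t - des) ≤ 0 := key t ht 1
    have g2 : β t - e2 * q t ≤ 0 := key t ht 2
    have g3 : a2 * q t - β t ≤ 0 := key t ht 3
    have hpp := hppos t ht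
    have hqp := hqpos t ht
    rw [le_div_iff₀ hpp, div_le_iff₀ hpp, le_div_iff₀ hqp, div_le_iff₀ hqp]
    refine ⟨⟨?_, ?_⟩, ?_, ?_⟩ <;> linarith
  obtain ⟨G, hG⟩ := (isCompact_Icc (a := a2) (b := e2)).exists_bound_of_continuousOn
    ((pp_gain_cont hbc hbc ha2'' he2'').mul (pp_eps_cont hbc hbc ha2'' he2''))
  have hG0 : 0 ≤ G := (norm_nonneg _).trans (hG a2 ⟨le_rfl, by linarith⟩)
  refine ⟨a1, e1, a2, e2, max V (kb / (rb / bc) * G), ⟨ha1'', by linarith, he1''⟩,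
    ⟨ha2'', by linarith, he2''⟩, hbox, ?_⟩
  intro t ht
  constructor
  · refine le_max_of_le_left (hvE t ht ?_ ?_)
    · have g0 : d t - des - e1 * p t ≤ 0 := key t ht 0
      linarith
    · have g1 : a1 * p t - (d t - des) ≤ 0 := key t ht 1
      linarith
  · refine le_max_of_le_right ?_
    have hg : |gainFn bc bc (β t / q t) * epsErr bc bc (β t / q t)| ≤ G := hG _ (hbox t ht).2
    have hqp := hqpos t ht
    have hqge := (hq t ht).1
    rw [hω t ht, mul_assoc, abs_mul, abs_of_pos (div_pos hkb hqp)]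
    gcongr

/-- Relative kinematics of a predecessor-follower pair. -/
lemma pp_kin (x0 y0 x y φ v0 φ0 v ω d β : ℝ → ℝ) (t d1 b1 : ℝ) (ht : 0 ≤ t)
    (hx0 : HasDerivWithinAt x0 (v0 t * Real.cos (φ0 t)) (Set.Ici (0 : ℝ)) t)
    (hy0 : HasDerivWithinAt y0 (v0 t * Real.sin (φ0 t)) (Set.Ici (0 : ℝ)) t)
    (hx : HasDerivWithinAt x (v t * Real.cos (φ t)) (Set.Ici (0 : ℝ)) t)
    (hy : HasDerivWithinAt y (v t * Real.sin (φ t)) (Set.Ici (0 : ℝ)) t)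
    (hφ : HasDerivWithinAt φ (ω t) (Set.Ici (0 : ℝ)) t)
    (hd : HasDerivWithinAt d d1 (Set.Ici (0 : ℝ)) t)
    (hb : HasDerivWithinAt β b1 (Set.Ici (0 : ℝ)) t)
    (hgx : ∀ t : ℝ, 0 ≤ t → x0 t - x t = d t * Real.cos (φ t + β t))
    (hgy : ∀ t : ℝ, 0 ≤ t → y0 t - y t = d t * Real.sin (φ t + β t)) :
    d1 = v0 t * Real.cos (φ0 t - (φ t + β t)) - v t * Real.cos (β t) ∧
    d t * (b1 + ω t) = v0 t * Real.sin (φ0 t - (φ t + β t)) + v t * Real.sin (β t) := by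
  have hu : UniqueDiffWithinAt ℝ (Set.Ici (0:ℝ)) t := uniqueDiffOn_Ici 0 t ht
  have e1 := hu.eq_deriv _ (hd.mul (hφ.add hb).cos)
    ((hx0.sub hx).congr (fun s hs => (hgx s hs).symm) (hgx t ht).symm)
  have e2 := hu.eq_deriv _ (hd.mul (hφ.add hb).sin)
    ((hy0.sub hy).congr (fun s hs => (hgy s hs).symm) (hgy t ht).symm)
  simp only [Pi.add_apply] at e1 e2
  set θ := φ t + β t with hθ
  have hβ : β t = θ - φ t := by rw [hθ]; ring
  rw [hβ, Real.cos_sub, Real.cos_sub, Real.sin_sub, Real.sin_sub]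
  have hs := Real.sin_sq_add_cos_sq θ
  constructor
  · linear_combination Real.cos θ * e1 + Real.sin θ * e2 - d1 * hs
  · linear_combination -Real.sin θ * e1 + Real.cos θ * e2 - d t * (b1 + ω t) * hs

/-- under the hypotheses of the platoon prescribed-performance
theorem, the normalized distance and bearing errors remain in compact
subintervals of (−M̲_{d_i}, M̄_{d_i}) and (−β_con, β_con) respectively, for
all t ≥ 0; consequently all control inputs v_i, ω_i are uniformly bounded. -/
theorem platoon_normalized_errors_compact_and_bounded_inputs
    (N : ℕ) (hN : 1 ≤ N)
    (d_col d_con β_con ρd_inf ρβ_inf l_d l_β : ℝ)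
    (d_des k_d k_β : ℕ → ℝ)
    (hd_col : 0 < d_col)
    (hd_des : ∀ i, 1 ≤ i → i ≤ N → d_col < d_des i ∧ d_des i < d_con)
    (hβ_con : 0 < β_con) (hβ_con' : β_con < Real.pi / 2)
    (hl_d : 0 < l_d) (hl_β : 0 < l_β)
    (hρd : 0 < ρd_inf)
    (hρd' : ∀ i, 1 ≤ i → i ≤ N → ρd_inf < max (d_des i - d_col) (d_con - d_des i))
    (hρβ : 0 < ρβ_inf) (hρβ' : ρβ_inf < β_con)
    (hk_d : ∀ i, 1 ≤ i → i ≤ N → 0 < k_d i)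
    (hk_β : ∀ i, 1 ≤ i → i ≤ N → 0 < k_β i)
    (x y φ v ω : ℕ → ℝ → ℝ)
    (hx : ∀ i, i ≤ N → ∀ t : ℝ, 0 ≤ t →
      HasDerivWithinAt (x i) (v i t * Real.cos (φ i t)) (Set.Ici (0 : ℝ)) t)
    (hy : ∀ i, i ≤ N → ∀ t : ℝ, 0 ≤ t →
      HasDerivWithinAt (y i) (v i t * Real.sin (φ i t)) (Set.Ici (0 : ℝ)) t)
    (hφ : ∀ i, i ≤ N → ∀ t : ℝ, 0 ≤ t →
      HasDerivWithinAt (φ i) (ω i t) (Set.Ici (0 : ℝ)) t)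
    (hlead : ∃ C : ℝ, ∀ t : ℝ, 0 ≤ t → |v 0 t| ≤ C ∧ |ω 0 t| ≤ C)
    (d β : ℕ → ℝ → ℝ)
    (hdiff : ∀ i, 1 ≤ i → i ≤ N → ∀ t : ℝ, 0 ≤ t →
      DifferentiableWithinAt ℝ (d i) (Set.Ici (0 : ℝ)) t ∧
      DifferentiableWithinAt ℝ (β i) (Set.Ici (0 : ℝ)) t)
    (hdpos : ∀ i, 1 ≤ i → i ≤ N → ∀ t : ℝ, 0 ≤ t → 0 < d i t)
    (hgx : ∀ i, 1 ≤ i → i ≤ N → ∀ t : ℝ, 0 ≤ t →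
      x (i - 1) t - x i t = d i t * Real.cos (φ i t + β i t))
    (hgy : ∀ i, 1 ≤ i → i ≤ N → ∀ t : ℝ, 0 ≤ t →
      y (i - 1) t - y i t = d i t * Real.sin (φ i t + β i t))
    (hv : ∀ i, 1 ≤ i → i ≤ N → ∀ t : ℝ, 0 ≤ t →
      v i t = k_d i * epsErr (d_des i - d_col) (d_con - d_des i)
        ((d i t - d_des i) /
          perfFn l_d ρd_inf (max (d_des i - d_col) (d_con - d_des i)) t))
    (hω : ∀ i, 1 ≤ i → i ≤ N → ∀ t : ℝ, 0 ≤ t →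
      ω i t = (k_β i / perfFn l_β ρβ_inf β_con t) *
        gainFn β_con β_con (β i t / perfFn l_β ρβ_inf β_con t) *
        epsErr β_con β_con (β i t / perfFn l_β ρβ_inf β_con t))
    (hinit : ∀ i, 1 ≤ i → i ≤ N →
      (d_col < d i 0 ∧ d i 0 < d_con) ∧ |β i 0| < β_con)
    :
    ∃ ξd_lo ξd_hi ξβ_lo ξβ_hi : ℕ → ℝ,
      (∀ i, 1 ≤ i → i ≤ N →
        (-(d_des i - d_col) < ξd_lo i ∧ ξd_lo i ≤ ξd_hi i ∧
          ξd_hi i < d_con - d_des i) ∧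
        (-β_con < ξβ_lo i ∧ ξβ_lo i ≤ ξβ_hi i ∧ ξβ_hi i < β_con) ∧
        (∀ t : ℝ, 0 ≤ t →
          (ξd_lo i ≤ (d i t - d_des i) /
              perfFn l_d ρd_inf (max (d_des i - d_col) (d_con - d_des i)) t ∧
            (d i t - d_des i) /
              perfFn l_d ρd_inf (max (d_des i - d_col) (d_con - d_des i)) t ≤
              ξd_hi i) ∧
          (ξβ_lo i ≤ β i t / perfFn l_β ρβ_inf β_con t ∧
            β i t / perfFn l_β ρβ_inf β_con t ≤ ξβ_hi i))) ∧
      ∃ C : ℝ, 0 < C ∧ ∀ i, 1 ≤ i → i ≤ N → ∀ t : ℝ, 0 ≤ t →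
        |v i t| ≤ C ∧ |ω i t| ≤ C := by
  have step : ∀ i, 1 ≤ i → i ≤ N → (∃ C0, ∀ t, 0 ≤ t → |v (i-1) t| ≤ C0) →
    ∃ a1 e1 a2 e2 C : ℝ, (-(d_des i - d_col) < a1 ∧ a1 ≤ e1 ∧ e1 < d_con - d_des i) ∧
      (-β_con < a2 ∧ a2 ≤ e2 ∧ e2 < β_con) ∧
      (∀ t : ℝ, 0 ≤ t →
        (a1 ≤ (d i t - d_des i) /
            perfFn l_d ρd_inf (max (d_des i - d_col) (d_con - d_des i)) t ∧
          (d i t - d_des i) /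
            perfFn l_d ρd_inf (max (d_des i - d_col) (d_con - d_des i)) t ≤ e1) ∧
        (a2 ≤ β i t / perfFn l_β ρβ_inf β_con t ∧ β i t / perfFn l_β ρβ_inf β_con t ≤ e2)) ∧
      ∀ t : ℝ, 0 ≤ t → |v i t| ≤ C ∧ |ω i t| ≤ C := by
    rintro i hi hiN ⟨C0, hC0⟩
    have hkin := fun t ht => pp_kin (x (i-1)) (y (i-1)) (x i) (y i) (φ i) (v (i-1)) (φ (i-1))
      (v i) (ω i) (d i) (β i) t _ _ ht (hx (i-1) (by omega) t ht) (hy (i-1) (by omega) t ht)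
      (hx i hiN t ht) (hy i hiN t ht) (hφ i hiN t ht)
      (hdiff i hi hiN t ht).1.hasDerivWithinAt (hdiff i hi hiN t ht).2.hasDerivWithinAt
      (hgx i hi hiN) (hgy i hi hiN)
    exact pp_step d_col d_con β_con ρd_inf ρβ_inf l_d l_β (d_des i) (k_d i) (k_β i) C0
      hd_col (hd_des i hi hiN).1 (hd_des i hi hiN).2 hβ_con hβ_con' hl_d hl_β hρd
      (hρd' i hi hiN) hρβ hρβ' (hk_d i hi hiN) (hk_β i hi hiN) (d i) (β i) (v i) (ω i)
      (v (i-1)) (fun t => φ (i-1) t - (φ i t + β i t)) _ _ hC0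
      (fun t ht => (hdiff i hi hiN t ht).1.hasDerivWithinAt)
      (fun t ht => (hdiff i hi hiN t ht).2.hasDerivWithinAt)
      (fun t ht => (hkin t ht).1) (fun t ht => (hkin t ht).2)
      (hv i hi hiN) (hω i hi hiN) (hinit i hi hiN).1.1 (hinit i hi hiN).1.2 (hinit i hi hiN).2
  have bnd : ∀ i, i ≤ N → ∃ C0, ∀ t, 0 ≤ t → |v i t| ≤ C0 := by
    intro i
    induction i with
    | zero =>
      intro _
      obtain ⟨C, hC⟩ := hlead
      exact ⟨C, fun t ht => (hC t ht).1⟩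
    | succ n ih =>
      intro hn
      obtain ⟨_, _, _, _, C, _, _, _, hC⟩ := step (n+1) (by omega) hn (ih (by omega))
      exact ⟨C, fun t ht => (hC t ht).1⟩
  have all := fun i (hi : 1 ≤ i ∧ i ≤ N) => step i hi.1 hi.2 (bnd (i-1) (by omega))
  choose! a1 e1 a2 e2 C h1 h2 h3 h4 using all
  refine ⟨a1, e1, a2, e2, fun i hi hiN => ⟨h1 i ⟨hi, hiN⟩, h2 i ⟨hi, hiN⟩, h3 i ⟨hi, hiN⟩⟩,
    ∑ i ∈ Finset.range (N+1), |C i| + 1, by positivity, ?_⟩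
  intro i hi hiN t ht
  have hle : |C i| ≤ ∑ i ∈ Finset.range (N+1), |C i| :=
    Finset.single_le_sum (f := fun i => |C i|) (fun j _ => abs_nonneg _)
      (Finset.mem_range.2 (by omega))
  have := h4 i ⟨hi, hiN⟩ t ht
  have h5 := le_abs_self (C i)
  exact ⟨by linarith [this.1], by linarith [this.2]⟩
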